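/- arXiv:2302.11417 — 13 statements merged into one kernel-verified Lean document; each statement's English description precedes it below -/
import Mathlib

section
/- Let H = (X, (s_i)_{i ∈ I}) be a hypergraph and let (R_1, R_2) be a pair with R_1 ⊆ I and R_2 ⊆ X. Then (R_1, R_2) is a minimal Roman hitting set of H if and only if the following two conditions hold: (1) for every i ∈ R_1, s_i ∩ R_2 = ∅; and (2) R_2 is a minimal hitting set of the family (s_i)_{i ∈ I \ R_1}. -/
/-- A Roman hitting set of the hypergraph given by the hyperedge family `s`:
a pair `(R1, R2)` such that every index `i` is in `R1` or `s i` meets `R2`. -/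
def IsRHS {X I : Type*} (s : I → Set X) (R1 : Set I) (R2 : Set X) : Prop :=
  ∀ i : I, i ∈ R1 ∨ (s i ∩ R2).Nonempty

/-- A minimal Roman hitting set: a rhs such that every rhs `(P1, P2) ≤ (R1, R2)`
equals `(R1, R2)`. -/
def IsMinimalRHS {X I : Type*} (s : I → Set X) (R1 : Set I) (R2 : Set X) : Prop :=
  IsRHS s R1 R2 ∧
    ∀ (P1 : Set I) (P2 : Set X), IsRHS s P1 P2 → P1 ⊆ R1 → P2 ⊆ R2 → P1 = R1 ∧ P2 = R2

/-- `D` is a hitting set of the subfamily `(s i)_{i ∈ J}`. -/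
def IsHittingSet {X I : Type*} (s : I → Set X) (J : Set I) (D : Set X) : Prop :=
  ∀ i ∈ J, (D ∩ s i).Nonempty

/-- `D` is a minimal hitting set of the subfamily `(s i)_{i ∈ J}`:
no proper subset of `D` is a hitting set of the subfamily. -/
def IsMinimalHittingSet {X I : Type*} (s : I → Set X) (J : Set I) (D : Set X) : Prop :=
  IsHittingSet s J D ∧ ∀ D' : Set X, D' ⊂ D → ¬ IsHittingSet s J D'

/-- A Roman hitting function for the hypergraph `s` with correspondence `τ`. -/
def IsRHF {X I : Type*} (s : I → Set X) (τ : X → I) (f : X → Fin 3) : Prop :=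
  ∀ i : I, (∃ x ∈ s i, f x = 2) ∨ (∃ x : X, τ x = i ∧ f x = 1)

/-- A minimal Roman hitting function: every rhf `g ≤ f` (pointwise) equals `f`. -/
def IsMinimalRHF {X I : Type*} (s : I → Set X) (τ : X → I) (f : X → Fin 3) : Prop :=
  IsRHF s τ f ∧ ∀ g : X → Fin 3, IsRHF s τ g → (∀ x, g x ≤ f x) → g = f

/-- `f` is extensible: some minimal rhf `g` satisfies `f ≤ g` pointwise. -/
def Extensible {X I : Type*} (s : I → Set X) (τ : X → I) (f : X → Fin 3) : Prop :=
  ∃ g : X → Fin 3, IsMinimalRHF s τ g ∧ ∀ x, f x ≤ g x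

/-- Characterization of minimal Roman hitting sets. -/
theorem minimalRHS_iff {X I : Type*} [Fintype X] [Fintype I]
    (s : I → Set X) (R1 : Set I) (R2 : Set X) :
    IsMinimalRHS s R1 R2 ↔
      (∀ i ∈ R1, s i ∩ R2 = ∅) ∧ IsMinimalHittingSet s R1ᶜ R2 := by
  constructor
  · rintro ⟨h, hm⟩
    refine ⟨fun i hi => ?_, fun i hi => ?_, fun D hD hh => ?_⟩
    · by_contra hne
      have hne' : (s i ∩ R2).Nonempty := Set.nonempty_iff_ne_empty.mpr hne
      have key := (hm (R1 \ {i}) R2 (fun j => by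
        by_cases hj : j = i
        · subst hj
          exact Or.inr hne'
        · rcases h j with h1 | h1
          · exact Or.inl ⟨h1, hj⟩
          · exact Or.inr h1) Set.diff_subset subset_rfl).1
      rw [← key] at hi
      exact hi.2 rfl
    · rw [Set.inter_comm]
      exact (h i).resolve_left hi
    · refine hD.ne (hm R1 D (fun j => ?_) subset_rfl hD.subset).2
      by_cases hj : j ∈ R1
      · exact Or.inl hj
      · right
        rw [Set.inter_comm]
        exact hh j hj
  · rintro ⟨h1, h2, h3⟩
    refine ⟨fun i => ?_, fun P1 P2 hP hP1 hP2 => ⟨?_, ?_⟩⟩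
    · by_cases hi : i ∈ R1
      · exact Or.inl hi
      · right
        rw [Set.inter_comm]
        exact h2 i hi
    · refine hP1.antisymm fun i hi => (hP i).resolve_right ?_
      rintro ⟨x, hx, hx2⟩
      have : x ∈ s i ∩ R2 := ⟨hx, hP2 hx2⟩
      rw [h1 i hi] at this
      exact this
    · by_contra hne
      refine h3 P2 (hP2.ssubset_of_ne hne) fun i hi => ?_
      rw [Set.inter_comm]
      exact (hP i).resolve_left fun h => hi (hP1 h)
end

section
/- Let H = (X, (s_i)_{i ∈ I}) be a hypergraph with correspondence τ and let f be a minimal Roman hitting function for (H, τ). Then for all x, y ∈ f⁻¹(1) with x ≠ y one has τ(x) ≠ τ(y); that is, the restriction of τ to f⁻¹(1) is injective. -/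
/-- For a minimal rhf `f`, the correspondence `τ` is injective
on `f⁻¹(1)`. -/
theorem minimalRHF_injOn_ones {X I : Type*} [Fintype X] [Fintype I]
    (s : I → Set X) (τ : X → I) (hτ : ∀ x, x ∈ s (τ x))
    (f : X → Fin 3) (hmin : IsMinimalRHF s τ f) :
    ∀ x ∈ f ⁻¹' {1}, ∀ y ∈ f ⁻¹' {1}, x ≠ y → τ x ≠ τ y := by
  classical
  intro x hx y hy hxy h
  simp only [Set.mem_preimage, Set.mem_singleton_iff] at hx hy
  have hg : Function.update f x 0 = f := by
    apply hmin.2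
    · intro i
      rcases hmin.1 i with ⟨z, hz, h2⟩ | ⟨z, hz, h1⟩
      · left
        have hzx : z ≠ x := by
          rintro rfl
          rw [hx] at h2
          exact absurd h2 (by decide)
        exact ⟨z, hz, by rw [Function.update_of_ne hzx, h2]⟩
      · right
        by_cases hzx : z = x
        · subst hzx
          exact ⟨y, by rw [← h, hz], by rw [Function.update_of_ne hxy.symm, hy]⟩
        · exact ⟨z, hz, by rw [Function.update_of_ne hzx, h1]⟩
    · intro z
      by_cases hzx : z = x
      · subst hzx
        simp
      · rw [Function.update_of_ne hzx]
  have h0 := congrFun hg x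
  rw [Function.update_self, hx] at h0
  exact absurd h0 (by decide)
end

section
/- Let H = (X, (s_i)_{i ∈ I}) be a hypergraph with correspondence τ and let f be a minimal Roman hitting function for (H, τ). Then for every x ∈ f⁻¹(1), the sets s_{τ(x)} and f⁻¹(2) are disjoint. -/
/-- For a minimal rhf `f` and every `x ∈ f⁻¹(1)`, the hyperedge
`s (τ x)` is disjoint from `f⁻¹(2)`. -/
theorem minimalRHF_tau_edge_disjoint {X I : Type*} [Fintype X] [Fintype I]
    (s : I → Set X) (τ : X → I) (hτ : ∀ x, x ∈ s (τ x))
    (f : X → Fin 3) (hmin : IsMinimalRHF s τ f) :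
    ∀ x ∈ f ⁻¹' {1}, s (τ x) ∩ f ⁻¹' {2} = ∅ := by
  classical
  intro x hx
  have hx1 : f x = 1 := hx
  rw [Set.eq_empty_iff_forall_notMem]
  rintro y ⟨hys, hy⟩
  have hy2 : f y = 2 := hy
  have hg : IsRHF s τ (Function.update f x 0) := by
    intro i
    rcases hmin.1 i with ⟨z, hz, hz2⟩ | ⟨z, hz, hz1⟩
    · have hne : z ≠ x := by
        rintro rfl
        rw [hx1] at hz2
        exact absurd hz2 (by decide)
      exact Or.inl ⟨z, hz, by rw [Function.update_of_ne hne, hz2]⟩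
    · by_cases h : z = x
      · have hne : y ≠ x := by
          rintro rfl
          rw [hx1] at hy2
          exact absurd hy2 (by decide)
        subst h
        subst hz
        exact Or.inl ⟨y, hys, by rw [Function.update_of_ne hne, hy2]⟩
      · exact Or.inr ⟨z, hz, by rw [Function.update_of_ne h, hz1]⟩
  have he := hmin.2 _ hg (by
    intro z
    by_cases h : z = x
    · subst h
      simp
    · rw [Function.update_of_ne h])
  have h0 := congrFun he x
  rw [Function.update_self, hx1] at h0
  exact absurd h0 (by decide)
end

section
/- Let H = (X, (s_i)_{i ∈ I}) be a hypergraph with correspondence τ and let f be a minimal Roman hitting function for (H, τ). Then f⁻¹(2) is a minimal hitting set of the family (s_i)_{i ∈ J}, where J = { i ∈ I : τ⁻¹(i) ∩ f⁻¹(1) = ∅ }. -/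
/-- For a minimal rhf `f`, `f⁻¹(2)` is a minimal hitting set of
the family `(s i)` over those `i` with `τ⁻¹(i) ∩ f⁻¹(1) = ∅`. -/
theorem minimalRHF_twos_minimalHittingSet {X I : Type*} [Fintype X] [Fintype I]
    (s : I → Set X) (τ : X → I) (hτ : ∀ x, x ∈ s (τ x))
    (f : X → Fin 3) (hmin : IsMinimalRHF s τ f) :
    IsMinimalHittingSet s {i : I | τ ⁻¹' {i} ∩ f ⁻¹' {1} = ∅} (f ⁻¹' {2}) := by
  classical
  obtain ⟨hf, hm⟩ := hmin
  refine ⟨?_, ?_⟩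
  · intro i hi
    rcases hf i with ⟨x, hx, h2⟩ | ⟨x, hx, h1⟩
    · exact ⟨x, h2, hx⟩
    · have hmem : x ∈ τ ⁻¹' {i} ∩ f ⁻¹' {1} := ⟨hx, h1⟩
      have hi' : τ ⁻¹' {i} ∩ f ⁻¹' {1} = ∅ := hi
      rw [hi'] at hmem
      exact hmem.elim
  · intro D' hD hhit
    have key := hm (fun x => if f x = 2 ∧ x ∉ D' then 0 else f x) ?_ ?_
    · apply hD.2
      intro x hx
      have hx2 : f x = 2 := hx
      by_contra hn
      have h := congrFun key x
      simp [hx2, hn] at h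
    · intro i
      by_cases hi : τ ⁻¹' {i} ∩ f ⁻¹' {1} = ∅
      · obtain ⟨x, hxD, hxs⟩ := hhit i hi
        have hx2 : f x = 2 := hD.1 hxD
        exact Or.inl ⟨x, hxs, by simp [hx2, hxD]⟩
      · obtain ⟨x, hx, h1⟩ := Set.nonempty_iff_ne_empty.mpr hi
        have h1' : f x = 1 := h1
        exact Or.inr ⟨x, hx, by simp [h1']⟩
    · intro x
      split_ifs
      · exact Fin.zero_le _
      · exact le_rfl
end

section
/- Let H = (X, (s_i)_{i ∈ I}) be a hypergraph with correspondence τ and let f be a minimal Roman hitting function for (H, τ). Then for every x ∈ f⁻¹(2) there exists an index i ∈ I with i ≠ τ(x) such that s_i ∩ f⁻¹(2) = {x}. -/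
/-- For a minimal rhf `f` and every `x ∈ f⁻¹(2)`, there is an
index `i ≠ τ x` with `s i ∩ f⁻¹(2) = {x}`. -/
theorem minimalRHF_private_edge {X I : Type*} [Fintype X] [Fintype I]
    (s : I → Set X) (τ : X → I) (hτ : ∀ x, x ∈ s (τ x))
    (f : X → Fin 3) (hmin : IsMinimalRHF s τ f) :
    ∀ x ∈ f ⁻¹' {2}, ∃ i : I, i ≠ τ x ∧ s i ∩ f ⁻¹' {2} = {x} := by
  classical
  intro x hx
  have hx2 : f x = 2 := hx
  by_contra hcon
  push Not at hcon
  have hg : IsRHF s τ (Function.update f x 1) := by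
    intro i
    by_cases hi : i = τ x
    · exact Or.inr ⟨x, hi.symm, by simp⟩
    · rcases hmin.1 i with ⟨y, hy, hfy⟩ | ⟨y, hy, hfy⟩
      · left
        by_contra hno
        push Not at hno
        have key : ∀ z ∈ s i, f z = 2 → z = x := by
          intro z hz hfz
          by_contra hzx
          exact hno z hz (by rw [Function.update_of_ne hzx]; exact hfz)
        apply hcon i hi
        ext z
        constructor
        · rintro ⟨hz, hfz⟩
          exact key z hz hfz
        · intro hz
          have hzx : z = x := hz
          have hyx := key y hy hfy
          subst hzx
          subst hyx
          exact ⟨hy, hfy⟩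
      · right
        have hyx : y ≠ x := by
          rintro rfl
          rw [hx2] at hfy
          exact absurd hfy (by decide)
        exact ⟨y, hy, by rw [Function.update_of_ne hyx]; exact hfy⟩
  have heq := hmin.2 _ hg (by
    intro z
    by_cases hz : z = x
    · subst hz
      rw [Function.update_self, hx2]
      decide
    · rw [Function.update_of_ne hz])
  have h1 := congrFun heq x
  rw [Function.update_self, hx2] at h1
  exact absurd h1 (by decide)
end

section
/- Let H = (X, (s_i)_{i ∈ I}) be a hypergraph with correspondence τ. A function f : X → {0,1,2} is a minimal Roman hitting function for (H, τ) if and only if the following four conditions hold: (0) for all x, y ∈ f⁻¹(1), x ≠ y implies τ(x) ≠ τ(y); (1) for every x ∈ f⁻¹(1), s_{τ(x)} ∩ f⁻¹(2) = ∅; (2) for every x ∈ f⁻¹(2) there exists i ∈ I with i ≠ τ(x) and s_i ∩ f⁻¹(2) = {x}; and (3) f⁻¹(2) is a minimal hitting set of the family (s_i)_{i ∈ J}, where J = { i ∈ I : τ⁻¹(i) ∩ f⁻¹(1) = ∅ }. -/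
theorem fin3_cases (a : Fin 3) : a = 0 ∨ a = 1 ∨ a = 2 := by
  revert a; decide

/-- Characterization of minimal Roman hitting functions. -/
theorem minimalRHF_iff {X I : Type*} [Fintype X] [Fintype I]
    (s : I → Set X) (τ : X → I) (hτ : ∀ x, x ∈ s (τ x))
    (f : X → Fin 3) :
    IsMinimalRHF s τ f ↔
      ((∀ x ∈ f ⁻¹' {1}, ∀ y ∈ f ⁻¹' {1}, x ≠ y → τ x ≠ τ y) ∧
       (∀ x ∈ f ⁻¹' {1}, s (τ x) ∩ f ⁻¹' {2} = ∅) ∧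
       (∀ x ∈ f ⁻¹' {2}, ∃ i : I, i ≠ τ x ∧ s i ∩ f ⁻¹' {2} = {x}) ∧
       IsMinimalHittingSet s {i : I | τ ⁻¹' {i} ∩ f ⁻¹' {1} = ∅} (f ⁻¹' {2})) := by
  classical
  constructor
  · rintro ⟨hf, hmin⟩
    -- lowering one value cannot give a rhf
    have key : ∀ (x : X) (v : Fin 3), v < f x →
        ¬ IsRHF s τ (Function.update f x v) := by
      intro x v hv hg
      have h := hmin _ hg (by
        intro y
        by_cases hy : y = x
        · subst hy; simpa using hv.le
        · simp [Function.update_of_ne hy])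
      have h2 := congrFun h x
      rw [Function.update_self] at h2
      exact absurd h2 hv.ne
    have h2 : ∀ x, f x = 2 → ∃ i : I, i ≠ τ x ∧ x ∈ s i ∧
        (∀ y ∈ s i, f y = 2 → y = x) ∧ ∀ y, τ y = i → f y ≠ 1 := by
      intro x hx
      have h := key x 1 (by rw [hx]; decide)
      unfold IsRHF at h
      push Not at h
      obtain ⟨i, ha, hb⟩ := h
      have hA : ∀ y ∈ s i, f y = 2 → y = x := by
        intro y hy hy2
        by_contra hne
        exact ha y hy (by rw [Function.update_of_ne hne]; exact hy2)
      have hB : ∀ y, τ y = i → f y ≠ 1 := by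
        intro y hy hy1
        have hne : y ≠ x := by
          rintro rfl
          rw [hx] at hy1; exact absurd hy1 (by decide)
        exact hb y hy (by rw [Function.update_of_ne hne]; exact hy1)
      refine ⟨i, ?_, ?_, hA, hB⟩
      · intro h
        exact hb x h.symm (by simp)
      · rcases hf i with ⟨y, hy, hy2⟩ | ⟨y, hy, hy1⟩
        · rw [← hA y hy hy2]; exact hy
        · exact absurd hy1 (hB y hy)
    have h01 : ∀ x, f x = 1 →
        ((∃ y ∈ s (τ x), f y = 2) ∨ ∃ y, y ≠ x ∧ τ y = τ x ∧ f y = 1) → False := by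
      intro x hx h
      refine key x 0 (by rw [hx]; decide) ?_
      have hup : ∀ y, f y = 2 → Function.update f x 0 y = 2 := by
        intro y hy
        have hne : y ≠ x := by
          rintro rfl
          rw [hx] at hy; exact absurd hy (by decide)
        rw [Function.update_of_ne hne]; exact hy
      intro i
      rcases hf i with ⟨y, hy, hy2⟩ | ⟨y, hy, hy1⟩
      · exact Or.inl ⟨y, hy, hup y hy2⟩
      · by_cases hne : y = x
        · subst hne
          subst hy
          rcases h with ⟨z, hz, hz2⟩ | ⟨z, hzx, hz, hz1⟩
          · exact Or.inl ⟨z, hz, hup z hz2⟩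
          · exact Or.inr ⟨z, hz, by rw [Function.update_of_ne hzx]; exact hz1⟩
        · exact Or.inr ⟨y, hy, by rw [Function.update_of_ne hne]; exact hy1⟩
    refine ⟨?_, ?_, ?_, ?_, ?_⟩
    · intro x hx y hy hxy h
      exact h01 x hx (Or.inr ⟨y, hxy.symm, h.symm, hy⟩)
    · intro x hx
      rw [Set.eq_empty_iff_forall_notMem]
      rintro y ⟨hy, hy2⟩
      exact h01 x hx (Or.inl ⟨y, hy, hy2⟩)
    · intro x hx
      obtain ⟨i, h1, h3, h4, _⟩ := h2 x hx
      refine ⟨i, h1, ?_⟩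
      ext y
      constructor
      · rintro ⟨hy, hy2⟩; exact h4 y hy hy2
      · rintro rfl; exact ⟨h3, hx⟩
    · intro i hi
      rcases hf i with ⟨y, hy, hy2⟩ | ⟨y, hy, hy1⟩
      · exact ⟨y, hy2, hy⟩
      · exact absurd (show y ∈ τ ⁻¹' {i} ∩ f ⁻¹' {1} from ⟨hy, hy1⟩)
          (Set.eq_empty_iff_forall_notMem.1 hi y)
    · intro D hD hh
      obtain ⟨hsub, x, hx, hxD⟩ := Set.ssubset_iff_exists.1 hD
      obtain ⟨i, _, _, h4, h5⟩ := h2 x hx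
      obtain ⟨y, hyD, hy⟩ := hh i (Set.eq_empty_iff_forall_notMem.2 (by
        rintro y ⟨hy, hy1⟩; exact h5 y hy hy1))
      exact hxD (h4 y hy (hsub hyD) ▸ hyD)
  · rintro ⟨h0, h1, h2, h3, -⟩
    refine ⟨?_, ?_⟩
    · intro i
      by_cases hi : τ ⁻¹' {i} ∩ f ⁻¹' {1} = ∅
      · obtain ⟨y, hy, hys⟩ := h3 i hi
        exact Or.inl ⟨y, hys, hy⟩
      · obtain ⟨y, hy, hy1⟩ := Set.nonempty_iff_ne_empty.2 hi
        exact Or.inr ⟨y, hy, hy1⟩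
    · intro g hg hle
      have g2 : ∀ y, g y = 2 → f y = 2 := by
        intro y hy
        have := hle y
        rw [hy] at this
        rcases fin3_cases (f y) with h | h | h
        · rw [h] at this; exact absurd this (by decide)
        · rw [h] at this; exact absurd this (by decide)
        · exact h
      have g1 : ∀ y, g y = 1 → f y = 1 ∨ f y = 2 := by
        intro y hy
        have := hle y
        rw [hy] at this
        rcases fin3_cases (f y) with h | h | h
        · rw [h] at this; exact absurd this (by decide)
        · exact Or.inl h
        · exact Or.inr h
      have h1' : ∀ x, f x = 1 → ∀ y ∈ s (τ x), f y ≠ 2 := by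
        intro x hx y hy hy2
        exact Set.eq_empty_iff_forall_notMem.1 (h1 x hx) y ⟨hy, hy2⟩
      funext x
      rcases fin3_cases (f x) with h | h | h
      · have := hle x
        rw [h] at this ⊢
        exact le_antisymm this (Fin.zero_le _)
      · rcases hg (τ x) with ⟨y, hy, hy2⟩ | ⟨y, hy, hy1⟩
        · exact absurd (g2 y hy2) (h1' x h y hy)
        · rcases g1 y hy1 with e | e
          · by_cases hyx : y = x
            · subst hyx; rw [hy1, h]
            · exact absurd hy (h0 y e x h hyx)
          · exact absurd e (h1' x h y (hy ▸ hτ y))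
      · obtain ⟨i, hi, hs⟩ := h2 x h
        have hx : x ∈ s i ∩ f ⁻¹' {2} := by rw [hs]; rfl
        have hu : ∀ y ∈ s i, f y = 2 → y = x := by
          intro y hy hy2
          have : y ∈ s i ∩ f ⁻¹' {2} := ⟨hy, hy2⟩
          rw [hs] at this; exact this
        rcases hg i with ⟨y, hy, hy2⟩ | ⟨y, hy, hy1⟩
        · have := hu y hy (g2 y hy2)
          subst this; rw [hy2, h]
        · rcases g1 y hy1 with e | e
          · exact absurd h (h1' y e x (hy ▸ hx.1))
          · have := hu y (hy ▸ hτ y) e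
            subst this
            exact absurd hy.symm hi
end

section
/- Let H = (X, (s_i)_{i ∈ I}) be a hypergraph with correspondence τ and let f be a minimal Roman hitting function for (H, τ). Then for every x ∈ f⁻¹(1) and every index i ∈ I with s_i = s_{τ(x)}, the set f⁻¹(1) ∩ τ⁻¹(i) is nonempty. -/
/-- For a minimal rhf `f`, every `x ∈ f⁻¹(1)` and every index `i`
with `s i = s (τ x)` satisfy `f⁻¹(1) ∩ τ⁻¹(i) ≠ ∅`. -/
theorem minimalRHF_equal_edges_hit_by_one {X I : Type*} [Fintype X] [Fintype I]
    (s : I → Set X) (τ : X → I) (hτ : ∀ x, x ∈ s (τ x))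
    (f : X → Fin 3) (hmin : IsMinimalRHF s τ f) :
    ∀ x ∈ f ⁻¹' {1}, ∀ i : I, s i = s (τ x) →
      (f ⁻¹' {1} ∩ τ ⁻¹' {i}).Nonempty := by
  classical
  intro x hx i hi
  have hx1 : f x = 1 := hx
  rcases hmin.1 i with ⟨y, hy, hy2⟩ | ⟨y, hy, hy1⟩
  · exfalso
    have key : ∀ z, f z = 2 → Function.update f x 0 z = 2 := by
      intro z hz
      have hne : z ≠ x := by
        rintro rfl
        rw [hx1] at hz
        exact absurd hz (by decide)
      rw [Function.update_of_ne hne, hz]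
    have hg : IsRHF s τ (Function.update f x 0) := by
      intro j
      rcases hmin.1 j with ⟨z, hz, hz2⟩ | ⟨z, hz, hz1⟩
      · exact Or.inl ⟨z, hz, key z hz2⟩
      · by_cases hzx : z = x
        · subst hzx
          subst hz
          exact Or.inl ⟨y, hi ▸ hy, key y hy2⟩
        · exact Or.inr ⟨z, hz, by rw [Function.update_of_ne hzx, hz1]⟩
    have h := hmin.2 _ hg (by
      intro z
      by_cases hzx : z = x
      · subst hzx
        simp
      · rw [Function.update_of_ne hzx])
    have h2 := congrFun h x
    rw [Function.update_self, hx1] at h2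
    exact absurd h2 (by decide)
  · exact ⟨y, hy1, hy⟩
end

section
/- Let H = (X, (s_i)_{i ∈ I}) be a hypergraph with correspondence τ and let f : X → {0,1,2} be a function with elements x ∈ f⁻¹(2) and y ∈ f⁻¹(1) such that x ∈ s_{τ(y)}. Then f is extensible if and only if f + χ_{{y}} is extensible, where f + χ_{{y}} is the function agreeing with f except that it maps y to f(y) + 1 = 2. -/
/-- If `f x = 2`, `f y = 1` and `x ∈ s (τ y)`, then `f` is
extensible iff the function obtained from `f` by raising the value at `y`
to `2` is extensible. -/
theorem extensible_update_one_to_two {X I : Type*} [Fintype X] [Fintype I]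
    [DecidableEq X] (s : I → Set X) (τ : X → I) (hτ : ∀ x, x ∈ s (τ x))
    (f : X → Fin 3) (x y : X) (hx : f x = 2) (hy : f y = 1)
    (hxy : x ∈ s (τ y)) :
    Extensible s τ f ↔ Extensible s τ (Function.update f y 2) := by
  constructor
  · rintro ⟨g, ⟨hg, hmin⟩, hfg⟩
    have hgx : g x = 2 := by
      have := hfg x
      rw [hx] at this
      omega
    have hgy : g y = 2 := by
      by_contra hne
      have h1 := hfg y
      rw [hy] at h1
      have hxney : x ≠ y := by
        rintro rfl
        exact hne hgx
      have h := hmin (Function.update g y 0) ?_ ?_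
      · have h2 := congrFun h y
        rw [Function.update_self] at h2
        rw [← h2] at h1
        exact absurd h1 (by decide)
      · intro i
        rcases hg i with ⟨z, hz, hz2⟩ | ⟨z, hz, hz1⟩
        · left
          refine ⟨z, hz, ?_⟩
          rw [Function.update_of_ne, hz2]
          rintro rfl
          exact hne hz2
        · by_cases hzy : z = y
          · subst hzy
            left
            refine ⟨x, hz ▸ hxy, ?_⟩
            rw [Function.update_of_ne hxney, hgx]
          · right
            exact ⟨z, hz, by rw [Function.update_of_ne hzy, hz1]⟩
      · intro z
        by_cases hzy : z = y
        · subst hzy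
          rw [Function.update_self]
          exact Fin.zero_le _
        · rw [Function.update_of_ne hzy]
    refine ⟨g, ⟨hg, hmin⟩, fun z => ?_⟩
    by_cases hzy : z = y
    · subst hzy
      rw [Function.update_self, hgy]
    · rw [Function.update_of_ne hzy]
      exact hfg z
  · rintro ⟨g, hg, hfg⟩
    refine ⟨g, hg, fun z => le_trans ?_ (hfg z)⟩
    by_cases hzy : z = y
    · subst hzy
      rw [Function.update_self, hy]
      decide
    · rw [Function.update_of_ne hzy]
end

section
/- Let H = (X, (s_i)_{i ∈ I}) be a hypergraph with correspondence τ and let f : X → {0,1,2} be a function with elements x, y ∈ f⁻¹(1), x ≠ y, and τ(x) = τ(y). Then f is extensible if and only if f + χ_{{x,y}} is extensible, where f + χ_{{x,y}} is the function agreeing with f except that it maps both x and y to 2. -/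
theorem aux_min {X I : Type*} [DecidableEq X] (s : I → Set X) (τ : X → I)
    (hτ : ∀ x, x ∈ s (τ x)) (g : X → Fin 3) (hg : IsMinimalRHF s τ g) (x y : X)
    (hne : x ≠ y) (hττ : τ x = τ y) (hx : 1 ≤ g x) (hy : 1 ≤ g y) : g x = 2 := by
  by_contra h2
  have h1 : g x = 1 := by revert hx h2; generalize g x = a; revert a; decide
  have hy' : g y = 1 ∨ g y = 2 := by revert hy; generalize g y = a; revert a; decide
  have key : Function.update g x 0 = g := by
    apply hg.2
    · intro i
      rcases hg.1 i with ⟨z, hz, hz2⟩ | ⟨z, hz, hz1⟩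
      · have : z ≠ x := by rintro rfl; exact h2 hz2
        exact Or.inl ⟨z, hz, by simp [this, hz2]⟩
      · by_cases hzx : z = x
        · subst hzx
          rcases hy' with h | h
          · exact Or.inr ⟨y, by rw [← hττ, hz], by simp [hne.symm, h]⟩
          · exact Or.inl ⟨y, by rw [← hz, hττ]; exact hτ y, by simp [hne.symm, h]⟩
        · exact Or.inr ⟨z, hz, by simp [hzx, hz1]⟩
    · intro z
      by_cases hzx : z = x
      · subst hzx; simp
      · simp [hzx]
  have := congrFun key x
  rw [Function.update_self, h1] at this
  exact absurd this (by decide)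

/-- If `f x = f y = 1` with `x ≠ y` and `τ x = τ y`, then `f` is
extensible iff the function obtained from `f` by raising the values at `x` and
`y` to `2` is extensible. -/
theorem extensible_update_two_ones {X I : Type*} [Fintype X] [Fintype I]
    [DecidableEq X] (s : I → Set X) (τ : X → I) (hτ : ∀ x, x ∈ s (τ x))
    (f : X → Fin 3) (x y : X) (hx : f x = 1) (hy : f y = 1)
    (hne : x ≠ y) (hττ : τ x = τ y) :
    Extensible s τ f ↔
      Extensible s τ (Function.update (Function.update f x 2) y 2) := by
  constructor
  · rintro ⟨g, hg, hfg⟩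
    have gx : 1 ≤ g x := hx ▸ hfg x
    have gy : 1 ≤ g y := hy ▸ hfg y
    have hx2 := aux_min s τ hτ g hg x y hne hττ gx gy
    have hy2 := aux_min s τ hτ g hg y x hne.symm hττ.symm gy gx
    refine ⟨g, hg, fun z => ?_⟩
    by_cases hzy : z = y
    · subst hzy; simp [hy2]
    · by_cases hzx : z = x
      · subst hzx; simp [hzy, hx2]
      · simpa [hzy, hzx] using hfg z
  · rintro ⟨g, hg, hfg⟩
    refine ⟨g, hg, fun z => le_trans ?_ (hfg z)⟩
    by_cases hzy : z = y
    · subst hzy; rw [hy, Function.update_self]; decide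
    · by_cases hzx : z = x
      · subst hzx; rw [hx, Function.update_of_ne hzy, Function.update_self]; decide
      · simp [hzy, hzx]
end

section
/- Let H = (X, (s_i)_{i ∈ I}) be a hypergraph with correspondence τ and let f : X → {0,1,2} be a function such that for all x, y ∈ f⁻¹(1), x ≠ y implies τ(x) ≠ τ(y). Then f is extensible if and only if there exist a set R_2 with f⁻¹(2) ⊆ R_2 ⊆ f⁻¹(1) ∪ f⁻¹(2) and a map ρ : R_2 → I satisfying: (1) ρ(x) ≠ τ(x) for every x ∈ R_2; (2) s_{ρ(x)} ∩ R_2 = {x} for every x ∈ R_2; (3) s_{τ(x)} ∩ R_2 = ∅ for every x ∈ f⁻¹(1) \ R_2; and (4) for every i ∈ I with τ⁻¹(i) = ∅: if s_i ⊆ (⋃_{x ∈ f⁻¹(1) \ R_2} s_{τ(x)}) ∪ (⋃_{x ∈ R_2} s_{ρ(x)}), then s_i ∩ R_2 ≠ ∅. -/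
theorem rhf_min_one {X I : Type*} {s : I → Set X} {τ : X → I} (hτ : ∀ x, x ∈ s (τ x))
    {g : X → Fin 3} (hg : IsMinimalRHF s τ g) {x : X} (hx : g x = 1) :
    ∀ y ∈ s (τ x), g y ≠ 2 := by
  classical
  intro y hy h2
  have hxy : y ≠ x := by rintro rfl; rw [hx] at h2; exact absurd h2 (by decide)
  have := hg.2 (Function.update g x 0) (by
    intro i
    rcases hg.1 i with ⟨z, hz, hz2⟩ | ⟨z, hz, hz1⟩
    · left
      refine ⟨z, hz, ?_⟩
      rw [Function.update_of_ne]
      · exact hz2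
      · rintro rfl; rw [hx] at hz2; exact absurd hz2 (by decide)
    · by_cases hzx : z = x
      · subst hzx
        subst hz
        exact Or.inl ⟨y, hy, by rw [Function.update_of_ne hxy]; exact h2⟩
      · exact Or.inr ⟨z, hz, by rw [Function.update_of_ne hzx]; exact hz1⟩) (by
    intro z
    by_cases hzx : z = x
    · subst hzx; simp
    · rw [Function.update_of_ne hzx])
  have h := congrFun this x
  rw [Function.update_self, hx] at h
  exact absurd h (by decide)

theorem rhf_min_two {X I : Type*} {s : I → Set X} {τ : X → I}
    {g : X → Fin 3} (hg : IsMinimalRHF s τ g) {x : X} (hx : g x = 2) :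
    ∃ i, i ≠ τ x ∧ x ∈ s i ∧ ∀ y ∈ s i, g y = 2 → y = x := by
  classical
  by_contra hcon
  push Not at hcon
  have := hg.2 (Function.update g x 1) (by
    intro i
    rcases hg.1 i with ⟨z, hz, hz2⟩ | ⟨z, hz, hz1⟩
    · by_cases hzx : z = x
      · subst hzx
        by_cases hi : i = τ z
        · exact Or.inr ⟨z, hi.symm, by simp⟩
        · obtain ⟨y, hy, hy2, hne⟩ := hcon i hi hz
          exact Or.inl ⟨y, hy, by rw [Function.update_of_ne hne]; exact hy2⟩
      · exact Or.inl ⟨z, hz, by rw [Function.update_of_ne hzx]; exact hz2⟩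
    · right
      refine ⟨z, hz, ?_⟩
      by_cases hzx : z = x
      · subst hzx; simp
      · rw [Function.update_of_ne hzx]; exact hz1) (by
    intro z
    by_cases hzx : z = x
    · subst hzx; rw [Function.update_self, hx]; decide
    · rw [Function.update_of_ne hzx])
  have h := congrFun this x
  rw [Function.update_self, hx] at h
  exact absurd h (by decide)

theorem rhf_min_of {X I : Type*} {s : I → Set X} {τ : X → I} (hτ : ∀ x, x ∈ s (τ x))
    {g : X → Fin 3} (hg : IsRHF s τ g)
    (h1 : ∀ x, g x = 1 → ∀ y ∈ s (τ x), g y ≠ 2)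
    (hi : ∀ x y, g x = 1 → g y = 1 → τ x = τ y → x = y)
    (h2 : ∀ x, g x = 2 → ∃ i, i ≠ τ x ∧ x ∈ s i ∧ ∀ y ∈ s i, g y = 2 → y = x) :
    IsMinimalRHF s τ g := by
  refine ⟨hg, fun g' hg' hle => ?_⟩
  have key : ∀ x, g x = 2 → g' x = 2 := by
    intro x hx
    obtain ⟨i, hit, hxi, hu⟩ := h2 x hx
    rcases hg' i with ⟨z, hz, hz2⟩ | ⟨z, hz, hz1⟩
    · have := hle z
      have hz' : g z = 2 := by rw [hz2] at this; omega
      rw [← hu z hz hz']; exact hz2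
    · exfalso
      have := hle z
      rcases fin3_cases (g z) with h | h | h
      · rw [h, hz1] at this; exact absurd this (by decide)
      · exact h1 z h x (hz ▸ hxi) hx
      · have := hu z (hz ▸ hτ z) h
        subst this
        exact hit hz.symm
  funext x
  rcases fin3_cases (g x) with h | h | h
  · have := hle x; rw [h] at this ⊢; omega
  · rw [h]
    rcases hg' (τ x) with ⟨z, hz, hz2⟩ | ⟨z, hz, hz1⟩
    · exfalso
      have := hle z
      exact h1 x h z hz (by rw [hz2] at this; omega)
    · have := hle z
      rcases fin3_cases (g z) with h' | h' | h'
      · rw [h', hz1] at this; exact absurd this (by decide)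
      · rw [← hi z x h' h hz]; exact hz1
      · rw [key z h'] at hz1; exact absurd hz1 (by decide)
  · rw [h]; exact key x h

/-- Characterization of extensibility, assuming `τ` is injective
on `f⁻¹(1)`. -/
theorem extensible_iff {X I : Type*} [Fintype X] [Fintype I]
    (s : I → Set X) (τ : X → I) (hτ : ∀ x, x ∈ s (τ x))
    (f : X → Fin 3)
    (hinj : ∀ x ∈ f ⁻¹' {1}, ∀ y ∈ f ⁻¹' {1}, x ≠ y → τ x ≠ τ y) :
    Extensible s τ f ↔
      ∃ (R2 : Set X) (ρ : X → I),
        f ⁻¹' {2} ⊆ R2 ∧ R2 ⊆ f ⁻¹' {1} ∪ f ⁻¹' {2} ∧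
        (∀ x ∈ R2, ρ x ≠ τ x) ∧
        (∀ x ∈ R2, s (ρ x) ∩ R2 = {x}) ∧
        (∀ x ∈ f ⁻¹' {1} \ R2, s (τ x) ∩ R2 = ∅) ∧
        (∀ i : I, τ ⁻¹' {i} = ∅ →
          s i ⊆ (⋃ x ∈ f ⁻¹' {1} \ R2, s (τ x)) ∪ (⋃ x ∈ R2, s (ρ x)) →
          (s i ∩ R2).Nonempty) := by
  classical
  constructor
  · rintro ⟨g, hg, hle⟩
    have hex : ∀ x, ∃ i, g x = 2 → i ≠ τ x ∧ x ∈ s i ∧ ∀ y ∈ s i, g y = 2 → y = x := by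
      intro x
      by_cases hx : g x = 2
      · obtain ⟨i, hi⟩ := rhf_min_two hg hx
        exact ⟨i, fun _ => hi⟩
      · exact ⟨τ x, fun h => absurd h hx⟩
    choose ρ hρ using hex
    have hρ1 := fun x hx => (hρ x hx).1
    have hρ2 := fun x hx => (hρ x hx).2.1
    have hρ3 := fun x hx => (hρ x hx).2.2
    have hone : ∀ x, f x = 1 → g x ≠ 2 → g x = 1 := by
      intro x hx h
      have := hle x
      rw [hx] at this
      omega
    refine ⟨{x | g x = 2 ∧ f x ≠ 0}, fun x => if g x = 2 then ρ x else τ x,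
      ?_, ?_, ?_, ?_, ?_, ?_⟩
    · intro x hx
      have hx' : f x = 2 := hx
      have := hle x
      rw [hx'] at this
      refine ⟨by omega, by rw [hx']; decide⟩
    · rintro x ⟨_, hx⟩
      rcases fin3_cases (f x) with h | h | h
      · exact absurd h hx
      · exact Or.inl h
      · exact Or.inr h
    · rintro x ⟨hx, _⟩
      simp only [hx, if_true]
      exact hρ1 x hx
    · rintro x ⟨hx, hx0⟩
      simp only [hx, if_true]
      ext y
      constructor
      · rintro ⟨hy, hy2, _⟩
        exact hρ3 x hx y hy hy2
      · rintro rfl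
        exact ⟨hρ2 y hx, hx, hx0⟩
    · rintro x ⟨hx, hxR⟩
      have hx' : f x = 1 := hx
      have hg1 := hone x hx' (fun h => hxR ⟨h, by rw [hx']; decide⟩)
      ext y
      simp only [Set.mem_empty_iff_false, iff_false]
      rintro ⟨hy, hy2, _⟩
      exact rhf_min_one hτ hg hg1 y hy hy2
    · intro i hi hsub
      rcases hg.1 i with ⟨z, hz, hz2⟩ | ⟨z, hz, hz1⟩
      · rcases hsub hz with h | h
        · simp only [Set.mem_iUnion] at h
          obtain ⟨x, ⟨hx, hxR⟩, hzx⟩ := h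
          have hx' : f x = 1 := hx
          have hg1 := hone x hx' (fun h => hxR ⟨h, by rw [hx']; decide⟩)
          exact absurd hz2 (rhf_min_one hτ hg hg1 z hzx)
        · simp only [Set.mem_iUnion] at h
          obtain ⟨x, ⟨hx, hxR⟩, hzx⟩ := h
          simp only [hx, if_true] at hzx
          have := hρ3 x hx z hzx hz2
          subst this
          exact ⟨z, hz, hx, hxR⟩
      · have : z ∈ τ ⁻¹' {i} := hz
        rw [hi] at this
        exact this.elim
  · rintro ⟨R2, ρ, h2R, hR, hρ1, hρ2, h3, h4⟩
    set U : Set X := (⋃ x ∈ f ⁻¹' {1} \ R2, s (τ x)) ∪ (⋃ x ∈ R2, s (ρ x)) with hU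
    let F : Set (Set X) := {V | R2 ⊆ V ∧ V ⊆ R2 ∪ Uᶜ ∧
      ∀ i, τ ⁻¹' {i} = ∅ → (s i ∩ V).Nonempty}
    have hF : (R2 ∪ Uᶜ) ∈ F := by
      refine ⟨Set.subset_union_left, subset_rfl, fun i hi => ?_⟩
      by_cases hs : s i ⊆ U
      · obtain ⟨y, hy, hy'⟩ := h4 i hi hs
        exact ⟨y, hy, Or.inl hy'⟩
      · obtain ⟨y, hy, hy'⟩ := Set.not_subset.1 hs
        exact ⟨y, hy, Or.inr hy'⟩
    obtain ⟨V, hV⟩ := (Set.toFinite F).exists_minimal ⟨_, hF⟩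
    obtain ⟨⟨hRV, hVU, hhit⟩, hmin⟩ := hV
    have hVR : ∀ y ∈ V, y ∈ U → y ∈ R2 := fun y hy hyU =>
      (hVU hy).resolve_right (fun h => h hyU)
    -- edges of remaining ones are not hit
    have hA : ∀ x, f x = 1 → x ∉ R2 → ¬ (s (τ x) ∩ V).Nonempty := by
      rintro x hx hxR ⟨y, hy, hyV⟩
      have hyU : y ∈ U := by
        left
        simp only [Set.mem_iUnion]
        exact ⟨x, ⟨hx, hxR⟩, hy⟩
      have : y ∈ s (τ x) ∩ R2 := ⟨hy, hVR y hyV hyU⟩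
      rw [h3 x ⟨hx, hxR⟩] at this
      exact this
    have hc : ∀ i, ¬ (s i ∩ V).Nonempty → ∃ x, τ x = i ∧
        ∀ y, f y = 1 → τ y = i → y = x := by
      intro i hi
      by_cases h : ∃ x, f x = 1 ∧ τ x = i
      · obtain ⟨x, hx, hxi⟩ := h
        refine ⟨x, hxi, fun y hy hyi => ?_⟩
        by_contra hne
        exact hinj y hy x hx hne (hyi.trans hxi.symm)
      · by_cases he : τ ⁻¹' {i} = ∅
        · exact absurd (hhit i he) hi
        · obtain ⟨x, hx⟩ := Set.nonempty_iff_ne_empty.2 he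
          exact ⟨x, hx, fun y hy hyi => absurd ⟨y, hy, hyi⟩ h⟩
    choose c hc1 hc2 using hc
    let g : X → Fin 3 := fun x => if x ∈ V then 2 else
      if ∃ h : ¬ (s (τ x) ∩ V).Nonempty, c (τ x) h = x then 1 else 0
    have g2 : ∀ x, g x = 2 ↔ x ∈ V := by
      intro x
      simp only [g]
      split_ifs <;> simp_all
    have g1 : ∀ x, g x = 1 ↔ ∃ h : ¬ (s (τ x) ∩ V).Nonempty, c (τ x) h = x := by
      intro x
      simp only [g]
      split_ifs with h h'
      · refine ⟨fun h => absurd h (by decide), fun h' => absurd ⟨x, hτ x, h⟩ h'.choose⟩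
      · simp [h']
      · exact ⟨fun h => absurd h (by decide), fun h => absurd h h'⟩
    refine ⟨g, rhf_min_of hτ ?_ ?_ ?_ ?_, ?_⟩
    · intro i
      by_cases hi : (s i ∩ V).Nonempty
      · obtain ⟨y, hy, hyV⟩ := hi
        exact Or.inl ⟨y, hy, (g2 y).2 hyV⟩
      · refine Or.inr ⟨c i hi, hc1 i hi, (g1 _).2 ?_⟩
        have aux : ∀ j, j = i → ∃ h : ¬ (s j ∩ V).Nonempty, c j h = c i hi := by
          rintro j rfl
          exact ⟨hi, rfl⟩
        exact aux _ (hc1 i hi)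
    · intro x hx y hy hy2
      exact ((g1 x).1 hx).choose ⟨y, hy, (g2 y).1 hy2⟩
    · intro x y hx hy hxy
      obtain ⟨a, ha⟩ := (g1 x).1 hx
      obtain ⟨b, hb⟩ := (g1 y).1 hy
      rw [← ha, ← hb]
      congr 1
    · intro x hx
      have hxV := (g2 x).1 hx
      by_cases hxR : x ∈ R2
      · have hs := hρ2 x hxR
        refine ⟨ρ x, hρ1 x hxR, ?_, fun y hy hy2 => ?_⟩
        · have : x ∈ s (ρ x) ∩ R2 := by rw [hs]; rfl
          exact this.1
        · have hyU : y ∈ U := by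
            right
            simp only [Set.mem_iUnion]
            exact ⟨x, hxR, hy⟩
          have : y ∈ s (ρ x) ∩ R2 := ⟨hy, hVR y ((g2 y).1 hy2) hyU⟩
          rw [hs] at this
          exact this
      · by_contra hcon
        push Not at hcon
        have hmem : V \ {x} ∈ F := by
          refine ⟨fun y hy => ⟨hRV hy, ?_⟩, fun y hy => hVU hy.1, fun i hi => ?_⟩
          · rintro rfl; exact hxR hy
          · obtain ⟨y, hy, hyV⟩ := hhit i hi
            by_cases hyx : y = x
            · subst hyx
              have hne : i ≠ τ y := by
                rintro rfl
                have : y ∈ τ ⁻¹' {τ y} := rfl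
                rw [hi] at this
                exact this
              obtain ⟨z, hz, hz2, hzy⟩ := hcon i hne hy
              exact ⟨z, hz, (g2 z).1 hz2, hzy⟩
            · exact ⟨y, hy, hyV, hyx⟩
        exact (hmin hmem Set.diff_subset hxV).2 rfl
    · intro x
      rcases fin3_cases (f x) with h | h | h
      · rw [h]; exact Fin.zero_le _
      · by_cases hxR : x ∈ R2
        · rw [h, (g2 x).2 (hRV hxR)]; decide
        · have hn := hA x h hxR
          rw [h, (g1 x).2 ⟨hn, (hc2 _ hn x h rfl).symm⟩]
      · rw [h, (g2 x).2 (hRV (h2R h))]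
end

section
/- Let H = (X, (s_i)_{i ∈ I}) be a hypergraph and let τ : X → I be a correspondence. Then τ is surjective if and only if for every Roman hitting set (R_1, R_2) of H there exists a Roman hitting function f : X → {0,1,2} for (H, τ) with f⁻¹(2) = R_2. -/
/-- The correspondence `τ` is surjective iff every Roman hitting
set `(R1, R2)` admits a Roman hitting function `f` with `f⁻¹(2) = R2`. -/
theorem surjective_iff_rhs_gives_rhf {X I : Type*} [Fintype X] [Fintype I]
    (s : I → Set X) (τ : X → I) (hτ : ∀ x, x ∈ s (τ x)) :
    Function.Surjective τ ↔
      ∀ (R1 : Set I) (R2 : Set X), IsRHS s R1 R2 →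
        ∃ f : X → Fin 3, IsRHF s τ f ∧ f ⁻¹' {2} = R2 := by
  classical
  constructor
  · intro h R1 R2 _
    refine ⟨fun x => if x ∈ R2 then 2 else 1, ?_, ?_⟩
    · intro i
      obtain ⟨x, rfl⟩ := h i
      by_cases hx : x ∈ R2
      · exact Or.inl ⟨x, hτ x, by simp [hx]⟩
      · exact Or.inr ⟨x, rfl, by simp [hx]⟩
    · ext x
      by_cases hx : x ∈ R2 <;> simp [hx]
  · intro h i
    obtain ⟨f, hf, h2⟩ := h Set.univ ∅ (fun _ => Or.inl trivial)
    rcases hf i with ⟨x, _, hx⟩ | ⟨x, hx, _⟩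
    · have : x ∈ f ⁻¹' {2} := hx
      rw [h2] at this
      exact this.elim
    · exact ⟨x, hx⟩
end

section
/- Let G = (V, E) be a finite simple graph and let G_nb = (V, (N[v])_{v ∈ V}) be its closed-neighborhood hypergraph. A function f : V → {0,1,2} is a PO-minimal Roman dominating function of G if and only if the pair (f⁻¹(1), f⁻¹(2)) is a minimal Roman hitting set of G_nb. -/
/-- A Roman dominating function of a (simple) graph. -/
def IsRDF {V : Type*} (G : SimpleGraph V) (f : V → Fin 3) : Prop :=
  ∀ v, f v = 0 → ∃ u, G.Adj v u ∧ f u = 2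

/-- A PO-minimal Roman dominating function: every rdf `g` with `g ≤_PO f`
(i.e., `g v = 0` or `g v = f v` for all `v`) equals `f`. -/
def IsPOMinimalRDF {V : Type*} (G : SimpleGraph V) (f : V → Fin 3) : Prop :=
  IsRDF G f ∧ ∀ g : V → Fin 3, IsRDF G g → (∀ v, g v = 0 ∨ g v = f v) → g = f

theorem rdf_iff_rhs_aux {V : Type*} (G : SimpleGraph V) (g : V → Fin 3) :
    IsRDF G g ↔ IsRHS (fun v : V => insert v (G.neighborSet v)) (g ⁻¹' {1}) (g ⁻¹' {2}) := by
  constructor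
  · intro h v
    have h3 : g v = 0 ∨ g v = 1 ∨ g v = 2 := by
      generalize g v = x
      fin_cases x <;> simp
    rcases h3 with h0 | h1 | h2
    · obtain ⟨u, hu, hu2⟩ := h v h0
      exact Or.inr ⟨u, Or.inr hu, hu2⟩
    · exact Or.inl h1
    · exact Or.inr ⟨v, Or.inl rfl, h2⟩
  · intro h v h0
    rcases h v with h1 | ⟨u, hu, hu2⟩
    · have h1' : g v = 1 := h1
      rw [h0] at h1'
      exact absurd h1' (by decide)
    · have hu2' : g u = 2 := hu2
      rcases hu with rfl | hu
      · rw [h0] at hu2'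
        exact absurd hu2' (by decide)
      · exact ⟨u, hu, hu2'⟩

/-- `f` is a PO-minimal rdf of `G` iff `(f⁻¹(1), f⁻¹(2))` is a
minimal Roman hitting set of the closed-neighborhood hypergraph of `G`. -/
theorem poMinimalRDF_iff_minimalRHS {V : Type*} [Fintype V] (G : SimpleGraph V)
    (f : V → Fin 3) :
    IsPOMinimalRDF G f ↔
      IsMinimalRHS (fun v : V => insert v (G.neighborSet v))
        (f ⁻¹' {1}) (f ⁻¹' {2}) := by
  classical
  unfold IsPOMinimalRDF IsMinimalRHS
  rw [rdf_iff_rhs_aux]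
  refine and_congr_right fun _ => ⟨fun h P1 P2 hP h1 h2 => ?_, fun h g hg hgf => ?_⟩
  · let g : V → Fin 3 := fun v => if v ∈ P1 then 1 else if v ∈ P2 then 2 else 0
    have hd : ∀ v, v ∈ P2 → v ∉ P1 := by
      intro v hv2 hv1
      have a : f v = 1 := h1 hv1
      have b : f v = 2 := h2 hv2
      rw [a] at b
      exact absurd b (by decide)
    have e1 : g ⁻¹' {1} = P1 := by
      ext v
      by_cases c1 : v ∈ P1 <;> by_cases c2 : v ∈ P2 <;> simp [g, c1, c2]
    have e2 : g ⁻¹' {2} = P2 := by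
      ext v
      have := hd v
      by_cases c1 : v ∈ P1 <;> by_cases c2 : v ∈ P2 <;> simp_all [g]
    have hgf : g = f := by
      apply h g
      · rw [rdf_iff_rhs_aux, e1, e2]
        exact hP
      · intro v
        by_cases c1 : v ∈ P1
        · right
          have a : f v = 1 := h1 c1
          simp [g, c1, a]
        · by_cases c2 : v ∈ P2
          · right
            have a : f v = 2 := h2 c2
            simp [g, c1, c2, a]
          · left
            simp [g, c1, c2]
    rw [← hgf]
    exact ⟨e1.symm, e2.symm⟩
  · have key : ∀ c : Fin 3, c ≠ 0 → g ⁻¹' {c} ⊆ f ⁻¹' {c} := by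
      intro c hc v hv
      have hv' : g v = c := hv
      rcases hgf v with h0 | h0
      · exact absurd (hv'.symm.trans h0) hc
      · exact h0.symm.trans hv'
    obtain ⟨e1, e2⟩ := h _ _ ((rdf_iff_rhs_aux G g).1 hg) (key 1 (by decide)) (key 2 (by decide))
    funext v
    rcases hgf v with h0 | h0
    · have h3 : f v = 0 ∨ f v = 1 ∨ f v = 2 := by
        generalize f v = x
        fin_cases x <;> simp
      rcases h3 with a | a | a
      · rw [h0, a]
      · have : v ∈ g ⁻¹' {1} := by rw [e1]; exact a
        exact (show g v = 1 from this).trans a.symm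
      · have : v ∈ g ⁻¹' {2} := by rw [e2]; exact a
        exact (show g v = 2 from this).trans a.symm
    · exact h0
end

section
/- For every n ≥ 1, consider the hypergraph H = (X, (s_i)_{i ∈ I}) with X = {x_1, …, x_{2n}} (2n distinct elements), I = {1, …, n}, and s_i = {x_{2i−1}, x_{2i}} for each i ∈ I. Then the number of minimal Roman hitting sets of H is exactly 3^n; in particular, H has at least 3^{(|X| + |I|)/3} minimal Roman hitting sets. -/
def rhsOf (n : ℕ) (f : Fin n → Fin 3) : Set (Fin n) × Set (Fin (2 * n)) :=
  ({i | (f i : ℕ) = 2},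
   {j | (f ⟨(j : ℕ) / 2, by have := j.2; omega⟩ : ℕ) = (j : ℕ) % 2})

theorem rhsOf_mem2 (n : ℕ) (f : Fin n → Fin 3) (i : Fin n) (j : Fin (2 * n))
    (h : (j : ℕ) = 2 * (i : ℕ) ∨ (j : ℕ) = 2 * (i : ℕ) + 1) :
    j ∈ (rhsOf n f).2 ↔ (f i : ℕ) = (j : ℕ) % 2 := by
  have : (⟨(j : ℕ) / 2, by have := j.2; omega⟩ : Fin n) = i := by
    apply Fin.ext
    simp only
    omega
  simp only [rhsOf, Set.mem_setOf_eq, this]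

theorem rhsOf_isRHS (n : ℕ) (f : Fin n → Fin 3) :
    IsRHS (fun i : Fin n => {j : Fin (2 * n) |
      (j : ℕ) = 2 * (i : ℕ) ∨ (j : ℕ) = 2 * (i : ℕ) + 1}) (rhsOf n f).1 (rhsOf n f).2 := by
  intro i
  by_cases h : (f i : ℕ) = 2
  · exact Or.inl h
  · right
    have h3 := (f i).2
    have hi := i.2
    have hj : ((⟨2 * (i : ℕ) + (f i : ℕ), by omega⟩ : Fin (2 * n)) : ℕ) = 2 * (i : ℕ) ∨
      ((⟨2 * (i : ℕ) + (f i : ℕ), by omega⟩ : Fin (2 * n)) : ℕ) = 2 * (i : ℕ) + 1 := by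
      simp only
      omega
    refine ⟨⟨2 * (i : ℕ) + (f i : ℕ), by omega⟩, hj, ?_⟩
    rw [rhsOf_mem2 n f i _ hj]
    simp only
    omega

theorem rhsOf_minimal (n : ℕ) (f : Fin n → Fin 3) :
    IsMinimalRHS (fun i : Fin n => {j : Fin (2 * n) |
      (j : ℕ) = 2 * (i : ℕ) ∨ (j : ℕ) = 2 * (i : ℕ) + 1}) (rhsOf n f).1 (rhsOf n f).2 := by
  refine ⟨rhsOf_isRHS n f, ?_⟩
  intro P1 P2 hP h1 h2
  constructor
  · apply Set.Subset.antisymm h1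
    intro i hi
    rcases hP i with h | ⟨j, hj, hj2⟩
    · exact h
    · have := (rhsOf_mem2 n f i j hj).1 (h2 hj2)
      have hi' : (f i : ℕ) = 2 := hi
      omega
  · apply Set.Subset.antisymm h2
    intro j hj
    have hjn := j.2
    obtain ⟨i, hi⟩ : ∃ i : Fin n, (i : ℕ) = (j : ℕ) / 2 := ⟨⟨(j : ℕ) / 2, by omega⟩, rfl⟩
    have e := (rhsOf_mem2 n f i j (by omega)).1 hj
    rcases hP i with h | ⟨k, hk, hk2⟩
    · have hi' : (f i : ℕ) = 2 := h1 h
      omega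
    · have e2 := (rhsOf_mem2 n f i k hk).1 (h2 hk2)
      have hk' : (k : ℕ) = 2 * (i : ℕ) ∨ (k : ℕ) = 2 * (i : ℕ) + 1 := hk
      have : k = j := by
        apply Fin.ext
        omega
      exact this ▸ hk2

theorem rhsOf_injective (n : ℕ) : Function.Injective (rhsOf n) := by
  intro f g h
  funext i
  have hi := i.2
  have h2 : (f i : ℕ) = 2 ↔ (g i : ℕ) = 2 := by
    have : i ∈ (rhsOf n f).1 ↔ i ∈ (rhsOf n g).1 := by rw [h]
    exact this
  have h0 := rhsOf_mem2 n f i ⟨2 * (i : ℕ), by omega⟩ (Or.inl rfl)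
  rw [h, rhsOf_mem2 n g i ⟨2 * (i : ℕ), by omega⟩ (Or.inl rfl)] at h0
  simp only at h0
  have := (f i).2
  have := (g i).2
  apply Fin.ext
  omega

theorem minimal_eq_range (n : ℕ) :
    {p : Set (Fin n) × Set (Fin (2 * n)) |
        IsMinimalRHS
          (fun i : Fin n => {j : Fin (2 * n) |
            (j : ℕ) = 2 * (i : ℕ) ∨ (j : ℕ) = 2 * (i : ℕ) + 1})
          p.1 p.2} = Set.range (rhsOf n) := by
  apply Set.Subset.antisymm
  · rintro ⟨R1, R2⟩ ⟨hR, hmin⟩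
    have key : ∀ i : Fin n, ∃ a : Fin 3, ((a : ℕ) = 2 → i ∈ R1) ∧
        ∀ j : Fin (2 * n), (j : ℕ) = 2 * (i : ℕ) + (a : ℕ) → (a : ℕ) < 2 → j ∈ R2 := by
      intro i
      rcases hR i with h | ⟨j, hj, hj2⟩
      · exact ⟨2, fun _ => h, fun j _ h => absurd h (by decide)⟩
      · have hj' : (j : ℕ) = 2 * (i : ℕ) ∨ (j : ℕ) = 2 * (i : ℕ) + 1 := hj
        refine ⟨⟨(j : ℕ) % 2, by omega⟩, fun h => ?_, fun k hk _ => ?_⟩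
        · simp only at h
          omega
        · simp only at hk
          have : j = k := by
            apply Fin.ext
            omega
          exact this ▸ hj2
    choose f hf1 hf2 using key
    have := hmin _ _ (rhsOf_isRHS n f) (fun i hi => hf1 i hi) (by
      intro j hj
      have hjn := j.2
      obtain ⟨i, hi⟩ : ∃ i : Fin n, (i : ℕ) = (j : ℕ) / 2 := ⟨⟨(j : ℕ) / 2, by omega⟩, rfl⟩
      have e := (rhsOf_mem2 n f i j (by omega)).1 hj
      exact hf2 i j (by omega) (by omega))
    exact ⟨f, Prod.ext this.1 this.2⟩
  · rintro _ ⟨f, rfl⟩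
    exact rhsOf_minimal n f

theorem minimal_ncard (n : ℕ) :
    {p : Set (Fin n) × Set (Fin (2 * n)) |
        IsMinimalRHS
          (fun i : Fin n => {j : Fin (2 * n) |
            (j : ℕ) = 2 * (i : ℕ) ∨ (j : ℕ) = 2 * (i : ℕ) + 1})
          p.1 p.2}.ncard = 3 ^ n := by
  rw [minimal_eq_range, ← Set.image_univ, Set.ncard_image_of_injective _ (rhsOf_injective n),
    Set.ncard_univ, Nat.card_eq_fintype_card]
  simp

/-- The hypergraph on `2n` vertices whose `n` hyperedges are the
disjoint pairs `{x_{2i}, x_{2i+1}}` has exactly `3^n` minimal Roman hitting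
sets; in particular at least `3^((|X|+|I|)/3)` many. -/
theorem count_minimalRHS_disjoint_pairs (n : ℕ) (hn : 1 ≤ n) :
    {p : Set (Fin n) × Set (Fin (2 * n)) |
        IsMinimalRHS
          (fun i : Fin n => {j : Fin (2 * n) |
            (j : ℕ) = 2 * (i : ℕ) ∨ (j : ℕ) = 2 * (i : ℕ) + 1})
          p.1 p.2}.ncard = 3 ^ n ∧
      3 ^ ((Fintype.card (Fin (2 * n)) + Fintype.card (Fin n)) / 3) ≤
        {p : Set (Fin n) × Set (Fin (2 * n)) |
          IsMinimalRHS
            (fun i : Fin n => {j : Fin (2 * n) |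
              (j : ℕ) = 2 * (i : ℕ) ∨ (j : ℕ) = 2 * (i : ℕ) + 1})
            p.1 p.2}.ncard := by
  refine ⟨minimal_ncard n, ?_⟩
  rw [minimal_ncard n, Fintype.card_fin, Fintype.card_fin]
  exact le_of_eq (congrArg _ (by omega))
end
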